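/- arXiv:2306.17272 — 4 statements merged into one kernel-verified Lean document; each statement's English description precedes it below -/
import Mathlib

section
/- Let G be a connected graph in the class W2. If G contains a leaf (a vertex of degree 1), then G is isomorphic to K2. -/
open SimpleGraph

/-- A set of vertices is independent if its elements are pairwise nonadjacent. -/
def IsIndep {V : Type*} (G : SimpleGraph V) (S : Set V) : Prop :=
  S.Pairwise fun a b => ¬ G.Adj a b

/-- The closed neighborhood `N[S]` of a set of vertices. -/
def closedNbhd {V : Type*} (G : SimpleGraph V) (S : Set V) : Set V :=
  S ∪ {x | ∃ s ∈ S, G.Adj s x}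

/-- The open neighborhood `N(S) = N[S] \ S` of a set of vertices. -/
def openNbhd {V : Type*} (G : SimpleGraph V) (S : Set V) : Set V :=
  closedNbhd G S \ S

/-- `S` dominates `T` if `T ⊆ N[S]`. -/
def Dominates {V : Type*} (G : SimpleGraph V) (S T : Set V) : Prop :=
  T ⊆ closedNbhd G S

/-- `N₂(v)`: the set of vertices at distance exactly 2 from `v`. -/
def N2 {V : Type*} (G : SimpleGraph V) (v : V) : Set V :=
  {u | u ≠ v ∧ ¬ G.Adj v u ∧ ∃ w, G.Adj v w ∧ G.Adj w u}

/-- A maximal independent set of the subgraph of `G` induced by `A`. -/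
def IsMaximalIndepOn {V : Type*} (G : SimpleGraph V) (A S : Set V) : Prop :=
  S ⊆ A ∧ IsIndep G S ∧ ∀ T, T ⊆ A → IsIndep G T → S ⊆ T → S = T

/-- A maximal independent set of `G`. -/
def IsMaximalIndep {V : Type*} (G : SimpleGraph V) (S : Set V) : Prop :=
  IsMaximalIndepOn G Set.univ S

/-- A maximum independent set of the subgraph of `G` induced by `A`. -/
def IsMaxIndepOn {V : Type*} (G : SimpleGraph V) (A S : Set V) : Prop :=
  S ⊆ A ∧ IsIndep G S ∧ ∀ T, T ⊆ A → IsIndep G T → T.ncard ≤ S.ncard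

/-- A maximum independent set of `G`. -/
def IsMaxIndep {V : Type*} (G : SimpleGraph V) (S : Set V) : Prop :=
  IsMaxIndepOn G Set.univ S

/-- The independence number of the subgraph of `G` induced by `A`. -/
noncomputable def alphaOn {V : Type*} (G : SimpleGraph V) (A : Set V) : ℕ :=
  sSup {n | ∃ S, S ⊆ A ∧ IsIndep G S ∧ S.ncard = n}

/-- The independence number `α(G)`. -/
noncomputable def alpha {V : Type*} (G : SimpleGraph V) : ℕ :=
  alphaOn G Set.univ

/-- The subgraph of `G` induced by `A` is well-covered. -/
def WellCoveredOn {V : Type*} (G : SimpleGraph V) (A : Set V) : Prop :=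
  ∀ S, IsMaximalIndepOn G A S → IsMaxIndepOn G A S

/-- `G` is well-covered: every maximal independent set is maximum. -/
def WellCovered {V : Type*} (G : SimpleGraph V) : Prop :=
  WellCoveredOn G Set.univ

/-- The subgraph of `G` induced by `A` is in the class `W₂`. -/
def W2On {V : Type*} (G : SimpleGraph V) (A : Set V) : Prop :=
  ∀ S₁ S₂ : Set V, S₁ ⊆ A → S₂ ⊆ A → IsIndep G S₁ → IsIndep G S₂ → Disjoint S₁ S₂ →
    ∃ T₁ T₂ : Set V, S₁ ⊆ T₁ ∧ S₂ ⊆ T₂ ∧ IsMaxIndepOn G A T₁ ∧ IsMaxIndepOn G A T₂ ∧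
      Disjoint T₁ T₂

/-- `G` belongs to the class `W₂`: every two pairwise disjoint independent sets are
included in two pairwise disjoint maximum independent sets. -/
def W2 {V : Type*} (G : SimpleGraph V) : Prop :=
  W2On G Set.univ

/-- `v` is a shedding vertex: for every independent set `S ⊆ V(G) \ N[v]` there exists
`u ∈ N(v)` such that `S ∪ {u}` is independent. -/
def Shedding {V : Type*} (G : SimpleGraph V) (v : V) : Prop :=
  ∀ S : Set V, Disjoint S (closedNbhd G {v}) → IsIndep G S →
    ∃ u ∈ G.neighborSet v, IsIndep G (insert u S)

/-- The edge `xy` is relating: there is an independent set `S ⊆ V(G) \ N[{x,y}]` such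
that both `S ∪ {x}` and `S ∪ {y}` are maximal independent sets of `G`. -/
def Relating {V : Type*} (G : SimpleGraph V) (x y : V) : Prop :=
  ∃ S : Set V, IsIndep G S ∧ Disjoint S (closedNbhd G {x, y}) ∧
    IsMaximalIndep G (insert x S) ∧ IsMaximalIndep G (insert y S)

/-- `G` contains no cycle of length `k` (as a subgraph). -/
def CycleFree {V : Type*} (G : SimpleGraph V) (k : ℕ) : Prop :=
  ∀ (u : V) (w : G.Walk u u), w.IsCycle → w.length ≠ k

/-- A vertex is simplicial if its closed neighborhood is a clique. -/
def Simplicial {V : Type*} (G : SimpleGraph V) (v : V) : Prop :=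
  G.IsClique (closedNbhd G {v})

/-!
In a `W₂` graph no open neighbourhood contains that of another vertex. Indeed, if
`N(v) ⊆ N(w)` with `v ≠ w`, extend `{v}` and `{w}` to disjoint maximum independent sets. The one
through `w` avoids `v` and meets none of its neighbours, so adding `v` would enlarge it. For a leaf
`v` with neighbour `u`, every `w ∈ N(u)` satisfies `N(v) = {u} ⊆ N(w)`, hence `N(u) = {v}`, and
connectedness leaves no room for further vertices.
-/

section

variable {V : Type*} {G : SimpleGraph V} {A T : Set V} {u v w : V}

theorem isIndep_insert :
    IsIndep G (insert v T) ↔ IsIndep G T ∧ ∀ x ∈ T, ¬ G.Adj v x := by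
  have : Std.Symm fun a b => ¬ G.Adj a b := ⟨fun _ _ hab hba => hab hba.symm⟩
  refine Set.pairwise_insert_of_symm.trans (and_congr_right fun _ => ?_)
  exact forall₂_congr fun _ _ => ⟨fun h hadj => h hadj.ne hadj, fun h _ => h⟩

-- `Set.ncard` gives an infinite set the value `0`, so such a set is beaten by any singleton.
theorem IsMaxIndepOn.finite (hT : IsMaxIndepOn G A T) : T.Finite := by
  obtain ⟨hTA, -, hmax⟩ := hT
  by_contra hinf
  obtain ⟨x, hx⟩ := Set.Infinite.nonempty hinf
  have hle := hmax {x} (Set.singleton_subset_iff.2 (hTA hx)) (Set.pairwise_singleton _ _)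
  rw [Set.ncard_singleton, Set.Infinite.ncard hinf] at hle
  exact Nat.not_succ_le_zero 0 hle

theorem IsMaxIndepOn.exists_adj_of_notMem (hT : IsMaxIndepOn G A T) (hvA : v ∈ A)
    (hvT : v ∉ T) : ∃ x ∈ T, G.Adj v x := by
  by_contra! hnonadj
  have hle := hT.2.2 (insert v T) (Set.insert_subset hvA hT.1)
    (isIndep_insert.2 ⟨hT.2.1, hnonadj⟩)
  rw [Set.ncard_insert_of_notMem hvT hT.finite] at hle
  exact Nat.not_succ_le_self _ hle

theorem W2On.eq_of_neighborSet_inter_subset (hA : W2On G A) (hv : v ∈ A) (hw : w ∈ A)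
    (hsub : G.neighborSet v ∩ A ⊆ G.neighborSet w) : v = w := by
  by_contra hne
  obtain ⟨T₁, T₂, hvT₁, hwT₂, -, hT₂, hdisj⟩ := hA {v} {w}
    (Set.singleton_subset_iff.2 hv) (Set.singleton_subset_iff.2 hw)
    (Set.pairwise_singleton _ _) (Set.pairwise_singleton _ _) (Set.disjoint_singleton.2 hne)
  have hvT₂ : v ∉ T₂ := Set.disjoint_left.1 hdisj (hvT₁ rfl)
  obtain ⟨x, hxT₂, hvx⟩ := hT₂.exists_adj_of_notMem hv hvT₂
  have hwx : G.Adj w x := hsub ⟨hvx, hT₂.1 hxT₂⟩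
  exact hT₂.2.1 (hwT₂ rfl) hxT₂ hwx.ne hwx

theorem W2.neighborSet_eq_singleton_symm (hG : W2 G) (hv : G.neighborSet v = {u}) :
    G.neighborSet u = {v} := by
  have hvu : G.Adj v u := by simp [← mem_neighborSet, hv]
  refine Set.eq_singleton_iff_unique_mem.2 ⟨hvu.symm, fun w huw => Eq.symm ?_⟩
  refine W2On.eq_of_neighborSet_inter_subset hG (Set.mem_univ v) (Set.mem_univ w) ?_
  rw [Set.inter_univ, hv, Set.singleton_subset_iff]
  exact huw.symm

theorem eq_univ_of_forall_neighborSet_subset (hG : G.Preconnected) (hA : A.Nonempty)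
    (hclosed : ∀ x ∈ A, G.neighborSet x ⊆ A) : A = Set.univ := by
  obtain ⟨a, ha⟩ := hA
  refine Set.eq_univ_of_forall fun b => by_contra fun hb => ?_
  obtain ⟨p⟩ := hG a b
  obtain ⟨d, -, hfst, hsnd⟩ := p.exists_boundary_dart A ha hb
  exact hsnd (hclosed d.fst hfst d.adj)

theorem nonempty_iso_top_fin_two (huv : G.Adj u v) (huniv : {u, v} = Set.univ) :
    Nonempty (G ≃g (⊤ : SimpleGraph (Fin 2))) := by
  have hcard : Nat.card V = 2 := Nat.card_eq_two_iff.2 ⟨u, v, huv.ne, huniv⟩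
  have : Finite V := Nat.finite_of_card_ne_zero (by omega)
  have htop : G = ⊤ := by
    rw [← isClique_univ, ← huniv]
    exact isClique_pair.2 fun _ => huv
  subst htop
  exact ⟨Iso.completeGraph (Finite.equivFinOfCardEq hcard)⟩

end

theorem stmt14_general {V : Type*} (G : SimpleGraph V) (hconn : G.Connected) (hW2 : W2 G)
    (v : V) (hleaf : (G.neighborSet v).ncard = 1) :
    Nonempty (G ≃g (⊤ : SimpleGraph (Fin 2))) := by
  obtain ⟨u, hv⟩ := Set.ncard_eq_one.1 hleaf
  have hu : G.neighborSet u = {v} := hW2.neighborSet_eq_singleton_symm hv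
  have huv : G.Adj u v := by simp [← mem_neighborSet, hu]
  have huniv : {u, v} = Set.univ := by
    refine eq_univ_of_forall_neighborSet_subset hconn.preconnected (Set.insert_nonempty _ _) ?_
    rintro x (rfl | rfl)
    · simp [hu]
    · simp [hv]
  exact nonempty_iso_top_fin_two huv huniv

/-- A connected `W₂` graph containing a leaf is isomorphic to `K₂`. -/
theorem stmt14 {V : Type*} [Fintype V] (G : SimpleGraph V)
    (hconn : G.Connected) (hW2 : W2 G)
    (v : V) (hleaf : (G.neighborSet v).ncard = 1) :
    Nonempty (G ≃g (⊤ : SimpleGraph (Fin 2))) :=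
  stmt14_general G hconn hW2 v hleaf
end

section
/- Let G be a graph with girth at least 5, and let v be a vertex lying on a cycle C of length 5 such that both neighbors of v on C have degree 2 in G. Then v is a shedding vertex of G. -/
open SimpleGraph

theorem IsIndep.insert {V : Type*} {G : SimpleGraph V} {S : Set V} {a : V}
    (hS : IsIndep G S) (ha : Disjoint S (G.neighborSet a)) : IsIndep G (insert a S) :=
  Set.Pairwise.insert hS fun _ hb _ =>
    have hab := Set.disjoint_left.mp ha hb
    ⟨hab, fun h => hab h.symm⟩

theorem neighborSet_eq_pair_of_ncard_eq_two {V : Type*} {G : SimpleGraph V} {w a b : V}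
    (hab : a ≠ b) (ha : G.Adj w a) (hb : G.Adj w b) (hw : (G.neighborSet w).ncard = 2) :
    G.neighborSet w = {a, b} := by
  have hfin : (G.neighborSet w).Finite := Set.finite_of_ncard_ne_zero (by lia)
  have hsub : {a, b} ⊆ G.neighborSet w := Set.pair_subset ha hb
  exact (Set.eq_of_subset_of_ncard_le hsub (by rw [hw, Set.ncard_pair hab]) hfin).symm

/-- An independent set avoiding `v` misses `x` or `y`, so it can be extended by `a` or by `b`. -/
theorem shedding_of_neighborSet_subset_pair {V : Type*} {G : SimpleGraph V} {v a b x y : V}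
    (hva : G.Adj v a) (hvb : G.Adj v b) (hxy : G.Adj x y)
    (ha : G.neighborSet a ⊆ {v, x}) (hb : G.neighborSet b ⊆ {v, y}) : Shedding G v := by
  intro S hdisj hS
  have hv : v ∉ S := fun h => Set.disjoint_left.mp hdisj h (Or.inl rfl)
  by_cases hx : x ∈ S
  · have hy : y ∉ S := fun hy => hS hx hy hxy.ne hxy
    have hSb : Disjoint S (G.neighborSet b) := Disjoint.mono_right hb (by simp [hv, hy])
    exact ⟨b, hvb, hS.insert hSb⟩
  · have hSa : Disjoint S (G.neighborSet a) := Disjoint.mono_right ha (by simp [hv, hx])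
    exact ⟨a, hva, hS.insert hSa⟩

theorem stmt15_general {V : Type*} {G : SimpleGraph V} {v v₁ v₂ v₃ v₄ : V}
    (hv₂ : v ≠ v₂) (hv₃ : v ≠ v₃)
    (e₁ : G.Adj v v₁) (e₂ : G.Adj v₁ v₂) (e₃ : G.Adj v₂ v₃)
    (e₄ : G.Adj v₃ v₄) (e₅ : G.Adj v₄ v)
    (hd₁ : (G.neighborSet v₁).ncard = 2) (hd₄ : (G.neighborSet v₄).ncard = 2) :
    Shedding G v :=
  have hN₁ : G.neighborSet v₁ = {v, v₂} :=
    neighborSet_eq_pair_of_ncard_eq_two hv₂ e₁.symm e₂ hd₁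
  have hN₄ : G.neighborSet v₄ = {v, v₃} :=
    neighborSet_eq_pair_of_ncard_eq_two hv₃ e₅ e₄.symm hd₄
  shedding_of_neighborSet_subset_pair e₁ e₅.symm e₃ hN₁.subset hN₄.subset

/-- In a graph with girth at least 5, a vertex lying on a 5-cycle whose
two neighbors on the cycle have degree 2 is a shedding vertex. -/
theorem stmt15 {V : Type*} [Fintype V] (G : SimpleGraph V)
    (hgirth : 5 ≤ G.egirth) (v v₁ v₂ v₃ v₄ : V)
    (hnodup : [v, v₁, v₂, v₃, v₄].Nodup)
    (e₁ : G.Adj v v₁) (e₂ : G.Adj v₁ v₂) (e₃ : G.Adj v₂ v₃)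
    (e₄ : G.Adj v₃ v₄) (e₅ : G.Adj v₄ v)
    (hd₁ : (G.neighborSet v₁).ncard = 2) (hd₄ : (G.neighborSet v₄).ncard = 2) :
    Shedding G v := by
  obtain ⟨hv₂, hv₃⟩ : v ≠ v₂ ∧ v ≠ v₃ := by simp_all
  exact stmt15_general hv₂ hv₃ e₁ e₂ e₃ e₄ e₅ hd₁ hd₄
end

section
/- Let X = {x1, ..., xn} be a set of Boolean variables and C = {c1, ..., cm} a set of clauses over X, where each clause is a set of literals containing, for each variable, at most one of that variable and its negation. Define a graph G with vertex set {v} ∪ {v_i : 1 ≤ i ≤ m} ∪ {u_{i,l} : 1 ≤ i ≤ m, l ∈ c_i} and edge set consisting of: the edges v v_i for 1 ≤ i ≤ m; the edges v_i u_{i,l} for every l ∈ c_i; and the edges u_{i,l} u_{j,l'} whenever l ∈ c_i, l' ∈ c_j, and l' is the negation of l. Then there exists a truth assignment to X satisfying all clauses of C if and only if v is not a shedding vertex of G. Moreover, G contains no cycle of length 3. -/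
open SimpleGraph

/-- The graph constructed from a SAT instance: a vertex `v` (here `none`), a vertex
`vᵢ` for each clause (here `some (Sum.inl i)`), and a vertex `u_{i,l}` for each clause
`i` and literal `l ∈ cᵢ` (here `some (Sum.inr ⟨i, l⟩)`). Edges: `v vᵢ` for all `i`;
`vᵢ u_{i,l}` for all `l ∈ cᵢ`; and `u_{i,l} u_{j,l'}` whenever `l'` is the negation
of `l`. A literal is a pair of a variable and a Boolean (`true` = positive). -/
def satGraph {X : Type*} {m : ℕ} (c : Fin m → Finset (X × Bool)) :
    SimpleGraph (Option (Fin m ⊕ (Σ i : Fin m, {l : X × Bool // l ∈ c i}))) :=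
  SimpleGraph.fromRel fun a b =>
    match a, b with
    | none, some (Sum.inl _) => True
    | some (Sum.inl i), some (Sum.inr u) => i = u.1
    | some (Sum.inr u), some (Sum.inr w) =>
        (w.2 : X × Bool).1 = (u.2 : X × Bool).1 ∧ (w.2 : X × Bool).2 = !(u.2 : X × Bool).2
    | _, _ => False

/-!
A set of literals is true under some assignment exactly when it is consistent, i.e. contains no
variable together with its negation. The vertices outside `N[v]` are the `u_{i,l}`. A set of them
is independent exactly when its literals are consistent, and it dominates
`N(v) = {v_1, …, v_m}` exactly when it picks a literal from every clause. So the sets witnessing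
that `v` is not shedding are the choices of true literals witnessing that `c` is satisfiable.

The vertices `u_{i,l}` induce a graph that is bipartite by the sign of `l`, so a triangle must
contain `v` or some `v_i`, whose neighborhood is then not independent. But `N(v)` is independent,
and so is `N(v_i)`, because the literals of `c i` are consistent.
-/

section Graph

variable {V : Type*} {G : SimpleGraph V}

theorem isIndep_insert_s16 {S : Set V} {a : V} :
    IsIndep G (insert a S) ↔ IsIndep G S ∧ ∀ b ∈ S, ¬ G.Adj a b := by
  have : Std.Symm fun a b => ¬ G.Adj a b := ⟨fun _ _ h h' => h h'.symm⟩
  refine Set.pairwise_insert_of_symm.trans (and_congr_right fun _ => forall₂_congr fun b _ => ?_)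
  exact ⟨fun h hab => h hab.ne hab, fun h _ => h⟩

theorem closedNbhd_singleton (v : V) : closedNbhd G {v} = insert v (G.neighborSet v) := by
  ext a
  simp [closedNbhd]

theorem dominates_iff_of_disjoint {S T : Set V} (h : Disjoint S T) :
    Dominates G S T ↔ ∀ u ∈ T, ∃ s ∈ S, G.Adj u s := by
  refine forall₂_congr fun u hu => ?_
  simp only [closedNbhd, Set.mem_union, Set.mem_ofPred_eq, G.adj_comm u,
    Set.disjoint_right.mp h hu, false_or]

theorem not_shedding_iff_exists_dominates {v : V} :
    ¬ Shedding G v ↔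
      ∃ S, Disjoint S (closedNbhd G {v}) ∧ IsIndep G S ∧ Dominates G S (G.neighborSet v) := by
  simp only [Shedding, not_forall, exists_prop]
  refine exists_congr fun S => and_congr_right fun hd => and_congr_right fun hS => ?_
  rw [closedNbhd_singleton, Set.disjoint_insert_right] at hd
  rw [dominates_iff_of_disjoint hd.2]
  simp only [isIndep_insert_s16, hS, true_and, not_exists, not_and, not_forall, not_not, exists_prop]

theorem cycleFree_three_iff_cliqueFree : CycleFree G 3 ↔ G.CliqueFree 3 := by
  simpa [CycleFree, CliqueFree] using (not_congr G.is3Clique_iff_exists_cycle_length_three).symm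

theorem cliqueFree_three_iff_isIndep_neighborSet {S : Set V} (hS : (G.induce S).CliqueFree 3) :
    G.CliqueFree 3 ↔ ∀ v ∉ S, IsIndep G (G.neighborSet v) := by
  classical
  refine ⟨fun h v _ => G.isIndepSet_neighborSet_of_triangleFree h v, fun h t ht => ?_⟩
  by_cases htS : (t : Set V) ⊆ S
  · exact (G.cliqueFree_induce_iff _ _).mp hS htS ht
  · obtain ⟨v, hvt, hvS⟩ := Set.not_subset.mp htS
    have hfree : G.CliqueFreeOn (G.neighborSet v) 2 := G.cliqueFreeOn_two.mpr (h v hvS)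
    refine hfree (fun a ha => ?_) (ht.erase_of_mem hvt)
    obtain ⟨hav, hat⟩ := Finset.mem_erase.mp ha
    exact ht.isClique hvt hat hav.symm

end Graph

section Literals

variable {X : Type*}

/-- The negation of a literal, a literal being a variable together with its sign
(`true` for the variable itself). -/
def negLit (l : X × Bool) : X × Bool := (l.1, !l.2)

/-- A set of literals is consistent if it contains no variable together with its negation. -/
def IsConsistent (L : Set (X × Bool)) : Prop :=
  ∀ x, ¬ ((x, true) ∈ L ∧ (x, false) ∈ L)

theorem negLit_negLit (l : X × Bool) : negLit (negLit l) = l := by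
  simp [negLit]

theorem negLit_ne_self (l : X × Bool) : negLit l ≠ l := by
  simp [negLit, Prod.ext_iff]

theorem isConsistent_iff_negLit_notMem {L : Set (X × Bool)} :
    IsConsistent L ↔ ∀ l ∈ L, negLit l ∉ L := by
  refine ⟨?_, fun h x hx => h _ hx.1 hx.2⟩
  rintro h ⟨x, _ | _⟩ hl hneg
  exacts [h x ⟨hneg, hl⟩, h x ⟨hl, hneg⟩]

theorem isConsistent_iff_exists_assignment {L : Set (X × Bool)} :
    IsConsistent L ↔ ∃ t : X → Bool, ∀ l ∈ L, t l.1 = l.2 := by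
  classical
  constructor
  · intro h
    refine ⟨fun x => decide ((x, true) ∈ L), ?_⟩
    rintro ⟨x, _ | _⟩ hl
    · exact decide_eq_false fun hx => h x ⟨hx, hl⟩
    · exact decide_eq_true hl
  · rintro ⟨t, ht⟩ x ⟨hpos, hneg⟩
    exact Bool.true_eq_false.mp ((ht _ hpos).symm.trans (ht _ hneg))

/-- The occurrences of literals in the clauses `c i`: pairs of a clause index `i` and a literal
`l ∈ c i`. They index the vertices `u_{i,l}` of `satGraph c`. -/
abbrev Occurrence {ι : Type*} (c : ι → Finset (X × Bool)) : Type _ :=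
  Σ i, {l : X × Bool // l ∈ c i}

variable {ι : Type*} {c : ι → Finset (X × Bool)}

/-- The literal of which `u` is an occurrence. -/
def Occurrence.literal (u : Occurrence c) : X × Bool := u.2

theorem exists_satisfying_iff_exists_isConsistent :
    (∃ t : X → Bool, ∀ i, ∃ l ∈ c i, t l.1 = l.2) ↔
      ∃ U : Set (Occurrence c), IsConsistent (Occurrence.literal '' U) ∧ ∀ i, ∃ u ∈ U, u.1 = i := by
  simp only [isConsistent_iff_exists_assignment, Set.forall_mem_image]
  constructor
  · rintro ⟨t, ht⟩
    refine ⟨{u | t u.literal.1 = u.literal.2}, ⟨t, fun _ hu => hu⟩, fun i => ?_⟩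
    obtain ⟨l, hl, htl⟩ := ht i
    exact ⟨⟨i, l, hl⟩, htl, rfl⟩
  · rintro ⟨U, ⟨t, ht⟩, hU⟩
    refine ⟨t, fun i => ?_⟩
    obtain ⟨u, hu, rfl⟩ := hU i
    exact ⟨u.literal, u.2.2, ht hu⟩

end Literals

namespace satGraph

variable {X : Type*} {m : ℕ} {c : Fin m → Finset (X × Bool)}

theorem adj_inl_inr {i : Fin m} {u : Occurrence c} :
    (satGraph c).Adj (some (.inl i)) (some (.inr u)) ↔ i = u.1 := by
  simp [satGraph]

theorem adj_inr_inr {u w : Occurrence c} :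
    (satGraph c).Adj (some (.inr u)) (some (.inr w)) ↔ w.literal = negLit u.literal := by
  have hrel (u w : Occurrence c) : (w.2.1.1 = u.2.1.1 ∧ w.2.1.2 = !u.2.1.2) ↔
      w.literal = negLit u.literal := (Prod.ext_iff (x := w.literal) (y := negLit u.literal)).symm
  have hsymm (h : u.literal = negLit w.literal) : w.literal = negLit u.literal := by
    rw [h, negLit_negLit]
  simp only [satGraph, fromRel_adj, hrel, or_iff_left_of_imp hsymm, and_iff_right_iff_imp]
  rintro h ⟨⟩
  exact negLit_ne_self _ h.symm

theorem neighborSet_none :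
    (satGraph c).neighborSet none = Set.range (some ∘ .inl) := by
  ext (_ | _ | _) <;> simp [satGraph]

theorem neighborSet_inl (i : Fin m) :
    (satGraph c).neighborSet (some (.inl i)) =
      insert none ((some ∘ .inr) '' {u : Occurrence c | u.1 = i}) := by
  ext (_ | _ | _)
  · simp [satGraph]
  · simp [satGraph]
  · simp [adj_inl_inr, @eq_comm _ i]

theorem isIndep_neighborSet_none : IsIndep (satGraph c) ((satGraph c).neighborSet none) := by
  rw [neighborSet_none]
  rintro _ ⟨i, rfl⟩ _ ⟨j, rfl⟩ _
  simp [satGraph]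

theorem isIndep_image_inr_iff {U : Set (Occurrence c)} :
    IsIndep (satGraph c) ((some ∘ .inr) '' U) ↔ IsConsistent (Occurrence.literal '' U) := by
  rw [isConsistent_iff_negLit_notMem, Set.forall_mem_image]
  constructor
  · rintro h u hu ⟨w, hw, hwu⟩
    have hadj := adj_inr_inr.mpr hwu
    exact h ⟨u, hu, rfl⟩ ⟨w, hw, rfl⟩ hadj.ne hadj
  · rintro h _ ⟨u, hu, rfl⟩ _ ⟨w, hw, rfl⟩ _ hadj
    exact h hu ⟨w, hw, adj_inr_inr.mp hadj⟩

theorem isIndep_neighborSet_inl_iff {i : Fin m} :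
    IsIndep (satGraph c) ((satGraph c).neighborSet (some (.inl i))) ↔
      IsConsistent (c i : Set (X × Bool)) := by
  have hliteral : Occurrence.literal '' {u : Occurrence c | u.1 = i} = c i := by
    ext l
    constructor
    · rintro ⟨u, rfl, rfl⟩
      exact u.2.2
    · exact fun hl => ⟨⟨i, l, hl⟩, rfl, rfl⟩
  have hnone : ∀ a ∈ (some ∘ .inr) '' {u : Occurrence c | u.1 = i},
      ¬ (satGraph c).Adj none a := by
    rintro _ ⟨u, -, rfl⟩
    simp [satGraph]
  rw [neighborSet_inl, isIndep_insert_s16, and_iff_left hnone, isIndep_image_inr_iff, hliteral]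

theorem isBipartite_induce_range_inr :
    ((satGraph c).induce (Set.range (some ∘ .inr))).IsBipartite := by
  let sign : Option (Fin m ⊕ Occurrence c) → Bool
    | some (.inr u) => u.literal.2
    | _ => true
  let coloring : ((satGraph c).induce (Set.range (some ∘ .inr))).Coloring Bool := by
    refine Coloring.mk (fun a => sign a) ?_
    rintro ⟨_, u, rfl⟩ ⟨_, w, rfl⟩ hadj
    simp [sign, adj_inr_inr.mp hadj, negLit]
  exact coloring.colorable

theorem cliqueFree_three_iff :
    (satGraph c).CliqueFree 3 ↔ ∀ i, IsConsistent (c i : Set (X × Bool)) := by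
  have hbip := isBipartite_induce_range_inr (c := c)
  rw [cliqueFree_three_iff_isIndep_neighborSet (hbip.cliqueFree (by decide))]
  constructor
  · exact fun h i => isIndep_neighborSet_inl_iff.mp (h _ (by simp))
  · rintro h (_ | i | u) hv
    · exact isIndep_neighborSet_none
    · exact isIndep_neighborSet_inl_iff.mpr (h i)
    · exact absurd ⟨u, rfl⟩ hv

theorem disjoint_closedNbhd_none_iff {S : Set (Option (Fin m ⊕ Occurrence c))} :
    Disjoint S (closedNbhd (satGraph c) {none}) ↔ S ∈ Set.range (Set.image (some ∘ .inr)) := by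
  have hN : closedNbhd (satGraph c) {none} = (Set.range (some ∘ .inr))ᶜ := by
    rw [closedNbhd_singleton, neighborSet_none]
    ext (_ | _ | _) <;> simp
  rw [hN, Set.disjoint_compl_right_iff_subset, Set.range_image, Set.mem_powerset_iff]

theorem dominates_image_inr_iff {U : Set (Occurrence c)} :
    Dominates (satGraph c) ((some ∘ .inr) '' U) ((satGraph c).neighborSet none) ↔
      ∀ i, ∃ u ∈ U, u.1 = i := by
  have hdisj : Disjoint ((some ∘ .inr) '' U) ((satGraph c).neighborSet none) := by
    rw [neighborSet_none, Set.disjoint_left]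
    rintro _ ⟨u, -, rfl⟩ ⟨i, ⟨⟩⟩
  rw [dominates_iff_of_disjoint hdisj, neighborSet_none, Set.forall_mem_range]
  simp only [Set.exists_mem_image, Function.comp_apply, adj_inl_inr, eq_comm]

theorem not_shedding_none_iff :
    ¬ Shedding (satGraph c) none ↔
      ∃ U : Set (Occurrence c), IsConsistent (Occurrence.literal '' U) ∧
        ∀ i, ∃ u ∈ U, u.1 = i := by
  simp only [not_shedding_iff_exists_dominates, disjoint_closedNbhd_none_iff,
    Set.exists_range_iff, isIndep_image_inr_iff, dominates_image_inr_iff]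

end satGraph

theorem stmt16_general {X : Type*} {m : ℕ} (c : Fin m → Finset (X × Bool)) :
    ((∃ t : X → Bool, ∀ i : Fin m, ∃ l ∈ c i, t l.1 = l.2) ↔
      ¬ Shedding (satGraph c) none) ∧
    (CycleFree (satGraph c) 3 ↔
      ∀ i : Fin m, ∀ x : X, ¬ ((x, true) ∈ c i ∧ (x, false) ∈ c i)) :=
  ⟨exists_satisfying_iff_exists_isConsistent.trans satGraph.not_shedding_none_iff.symm,
    cycleFree_three_iff_cliqueFree.trans satGraph.cliqueFree_three_iff⟩

/-- For a SAT instance with clauses `c₁, …, c_m` (each clause containing,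
for each variable, at most one of the variable and its negation), the instance is
satisfiable iff `v` is not a shedding vertex of the constructed graph `G`; moreover,
`G` contains no cycle of length 3. -/
theorem stmt16 {X : Type*} [Fintype X] [DecidableEq X] {m : ℕ}
    (c : Fin m → Finset (X × Bool))
    (hvalid : ∀ i : Fin m, ∀ x : X, ¬ ((x, true) ∈ c i ∧ (x, false) ∈ c i)) :
    ((∃ t : X → Bool, ∀ i : Fin m, ∃ l ∈ c i, t l.1 = l.2) ↔
      ¬ Shedding (satGraph c) none) ∧
    CycleFree (satGraph c) 3 := by
  exact ⟨(stmt16_general c).1, (stmt16_general c).2.mpr hvalid⟩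
end

section
/- Let G be a graph. The following are equivalent: (1) G admits two disjoint maximum independent sets; (2) there exists a matching M of size α(G) in G such that the subgraph induced by the set V(M) of vertices covered by M is bipartite; (3) there exists a set A ⊆ V(G) such that the induced subgraph G[V(G) \ A] is a bipartite graph having a perfect matching, and this perfect matching has size α(G). -/
open SimpleGraph

/-!
Let `T` be a maximum independent set and `X` an independent set disjoint from it. Exchanging
`N(X) ∩ T` for `X` inside `T` gives an independent set, so `|X| ≤ |N(X) ∩ T|`. This is Hall's
condition: every independent set disjoint from `T` can be matched into `T`, and two disjoint
maximum independent sets are matched perfectly to each other. Conversely, a matching whose vertex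
set is the union of two independent sets has exactly one endpoint of each edge in either of them,
so if it has `α(G)` edges, then both sets have `α(G)` elements.
-/

section

variable {V : Type*} {G : SimpleGraph V} {S T X W : Set V}

lemma IsIndep.mono (hT : IsIndep G T) (hST : S ⊆ T) : IsIndep G S :=
  Set.Pairwise.mono hST hT

lemma IsIndep.not_adj {u v : V} (hS : IsIndep G S) (hu : u ∈ S) (hv : v ∈ S) : ¬ G.Adj u v :=
  fun huv => hS hu hv huv.ne huv

lemma IsIndep.union (hS : IsIndep G S) (hT : IsIndep G T)
    (hST : ∀ s ∈ S, ∀ t ∈ T, ¬ G.Adj s t) : IsIndep G (S ∪ T) :=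
  Set.pairwise_union.2
    ⟨hS, hT, fun s hs t ht _ => ⟨hST s hs t ht, fun hts => hST s hs t ht hts.symm⟩⟩

lemma IsMaxIndep.isIndep (hT : IsMaxIndep G T) : IsIndep G T :=
  hT.2.1

lemma IsMaxIndep.ncard_le (hT : IsMaxIndep G T) (hX : IsIndep G X) : X.ncard ≤ T.ncard :=
  hT.2.2 X (Set.subset_univ X) hX

lemma IsMaxIndep.finite_of_isIndep (hT : IsMaxIndep G T) (hX : IsIndep G X) : X.Finite := by
  by_contra hinf
  obtain ⟨Y, hYX, -, hY⟩ := Set.Infinite.exists_subset_ncard_eq hinf (T.ncard + 1)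
  have hYT : Y.ncard ≤ T.ncard := hT.ncard_le (hX.mono hYX)
  omega

lemma IsMaxIndep.ncard_eq (hS : IsMaxIndep G S) (hT : IsMaxIndep G T) : S.ncard = T.ncard :=
  le_antisymm (hT.ncard_le hS.isIndep) (hS.ncard_le hT.isIndep)

lemma IsMaxIndep.ncard_eq_alpha (hT : IsMaxIndep G T) : T.ncard = alpha G := by
  have hgreatest : IsGreatest {n | ∃ X : Set V, X ⊆ Set.univ ∧ IsIndep G X ∧ X.ncard = n}
      T.ncard := by
    refine ⟨⟨T, hT.1, hT.isIndep, rfl⟩, ?_⟩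
    rintro _ ⟨X, -, hX, rfl⟩
    exact hT.ncard_le hX
  exact hgreatest.csSup_eq.symm

lemma isMaxIndep_of_ncard_eq_alpha (hα : BddAbove (Set.ncard '' {X : Set V | IsIndep G X}))
    (hS : IsIndep G S) (hcard : S.ncard = alpha G) : IsMaxIndep G S := by
  refine ⟨Set.subset_univ S, hS, fun X hXuniv hX => hcard ▸ le_csSup (hα.mono ?_) ?_⟩
  · rintro _ ⟨Y, -, hY, rfl⟩
    exact ⟨Y, hY, rfl⟩
  · exact ⟨X, hXuniv, hX, rfl⟩

lemma IsMaxIndep.ncard_le_ncard_neighbors (hT : IsMaxIndep G T) (hX : IsIndep G X)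
    (hXT : Disjoint X T) : X.ncard ≤ {t ∈ T | ∃ x ∈ X, G.Adj x t}.ncard := by
  set N : Set V := {t ∈ T | ∃ x ∈ X, G.Adj x t}
  have hNT : N ⊆ T := Set.sep_subset T _
  have hTfin : T.Finite := hT.finite_of_isIndep hT.isIndep
  have hexch : IsIndep G (X ∪ T \ N) :=
    hX.union (hT.isIndep.mono Set.sdiff_subset) fun x hx t ht hxt => ht.2 ⟨ht.1, x, hx, hxt⟩
  have hcard : X.ncard + (T \ N).ncard ≤ T.ncard :=
    Set.ncard_union_eq (hXT.mono_right Set.sdiff_subset) (hT.finite_of_isIndep hX)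
      (hTfin.subset Set.sdiff_subset) ▸ hT.ncard_le hexch
  have hsplit : (T \ N).ncard + N.ncard = T.ncard :=
    Set.ncard_sdiff_add_ncard_of_subset hNT hTfin
  omega

lemma IsMaxIndep.exists_injective_adj (hT : IsMaxIndep G T) (hX : IsIndep G X)
    (hXT : Disjoint X T) : ∃ f : X → T, Function.Injective f ∧ ∀ x : X, G.Adj x (f x) := by
  classical
  have : Fintype T := (hT.finite_of_isIndep hT.isIndep).fintype
  refine (Fintype.all_card_le_filter_rel_iff_exists_injective
    fun (x : X) (t : T) => G.Adj x t).1 fun A => ?_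
  have hAX : Subtype.val '' (A : Set X) ⊆ X := Subtype.coe_image_subset X _
  have hHall := hT.ncard_le_ncard_neighbors (hX.mono hAX) (hXT.mono_left hAX)
  convert hHall using 1
  · rw [Set.ncard_image_of_injective _ Subtype.val_injective, Set.ncard_coe_finset]
  · rw [← Set.ncard_coe_finset, ← Set.ncard_image_of_injective _ Subtype.val_injective]
    congr 1
    ext t
    simp [and_comm]

lemma IsMaxIndep.exists_isMatching_verts_eq_union (hS : IsMaxIndep G S) (hT : IsMaxIndep G T)
    (hST : Disjoint S T) : ∃ M : G.Subgraph, M.IsMatching ∧ M.verts = S ∪ T := by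
  obtain ⟨f, hf, hadj⟩ := hT.exists_injective_adj hS.isIndep hST
  have : Finite T := hT.finite_of_isIndep hT.isIndep
  have hbij : Function.Bijective f := hf.bijective_of_nat_card_le (hT.ncard_eq hS).le
  obtain ⟨M, hverts, hM⟩ :=
    Subgraph.IsMatching.exists_of_disjoint_sets_of_equiv hST (Equiv.ofBijective f hbij) hadj
  exact ⟨M, hM, hverts⟩

lemma ncard_edgeSet_eq_of_verts_eq_union {M : G.Subgraph} (hM : M.IsMatching)
    (hverts : M.verts = S ∪ T) (hS : IsIndep G S) (hT : IsIndep G T) :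
    M.edgeSet.ncard = S.ncard := by
  have hSM : S ⊆ M.verts := hverts ▸ Set.subset_union_left
  refine (Set.ncard_congr (fun v hv => (hM.toEdge ⟨v, hSM hv⟩ : Sym2 V))
    (fun v hv => (hM.toEdge ⟨v, hSM hv⟩).2) ?_ ?_).symm
  · intro u v hu hv huv
    obtain ⟨w, hw, -⟩ := hM (hSM hu)
    have hvw : v ∈ s(u, w) := by
      simpa only [← huv, hM.toEdge_eq_of_adj hw] using hM.mem_coe_toEdge (hSM hv)
    obtain rfl | rfl := Sym2.mem_iff.1 hvw
    · rfl
    · exact absurd hw.adj_sub (hS.not_adj hu hv)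
  · intro e he
    induction e using Sym2.ind with
    | _ a b =>
      have hab : M.Adj a b := he
      have ha : a ∈ S ∪ T := hverts ▸ M.edge_vert hab
      have hb : b ∈ S ∪ T := hverts ▸ M.edge_vert hab.symm
      obtain ha | ha := ha
      · exact ⟨a, ha, congrArg Subtype.val (hM.toEdge_eq_of_adj hab)⟩
      · have hbS : b ∈ S := hb.resolve_right fun hbT => hT.not_adj ha hbT hab.adj_sub
        exact ⟨b, hbS, (congrArg Subtype.val (hM.toEdge_eq_of_adj hab.symm)).trans Sym2.eq_swap⟩

lemma colorable_two_induce_iff_exists_isIndep :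
    (G.induce W).Colorable 2 ↔
      ∃ S T : Set V, IsIndep G S ∧ IsIndep G T ∧ Disjoint S T ∧ W = S ∪ T := by
  classical
  constructor
  · rintro ⟨C⟩
    have hclass (i : Fin 2) : IsIndep G (Subtype.val '' C.colorClass i) := by
      rintro _ ⟨u, hu, rfl⟩ _ ⟨v, hv, rfl⟩ - huv
      exact C.valid huv (hu.trans hv.symm)
    refine ⟨_, _, hclass 0, hclass 1, ?_, ?_⟩
    · refine (Set.disjoint_image_iff Subtype.val_injective).2 (Set.disjoint_left.2 ?_)
      intro v hv hv'
      exact zero_ne_one (hv.symm.trans hv')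
    · have hcover : C.colorClass 0 ∪ C.colorClass 1 = Set.univ :=
        Set.eq_univ_of_forall fun v => Fin.exists_fin_two.1 ⟨C v, rfl⟩
      rw [← Set.image_union, hcover, Subtype.coe_image_univ]
  · rintro ⟨S, T, hS, hT, -, rfl⟩
    refine ⟨Coloring.mk (fun v => if (v : V) ∈ S then (0 : Fin 2) else 1) ?_⟩
    rintro ⟨u, hu⟩ ⟨v, hv⟩ huv
    have huv : G.Adj u v := huv
    have hSuv : ¬ (u ∈ S ∧ v ∈ S) := fun h => hS.not_adj h.1 h.2 huv
    have hTuv : ¬ (u ∈ T ∧ v ∈ T) := fun h => hT.not_adj h.1 h.2 huv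
    grind

lemma exists_isPerfectMatching_induce_iff {n : ℕ} :
    (∃ M : (G.induce W).Subgraph, M.IsPerfectMatching ∧ M.edgeSet.ncard = n) ↔
      ∃ M : G.Subgraph, M.IsMatching ∧ M.verts = W ∧ M.edgeSet.ncard = n := by
  let ι : G.induce W →g G := (Embedding.induce W).toHom
  have hι : Function.Injective ι := Subtype.val_injective
  have hncard (M : (G.induce W).Subgraph) : (M.map ι).edgeSet.ncard = M.edgeSet.ncard := by
    rw [Subgraph.edgeSet_map, Set.ncard_image_of_injective _ (Sym2.map.injective hι)]
  constructor
  · rintro ⟨M, ⟨hM, hspan⟩, rfl⟩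
    refine ⟨M.map ι, hM.map ι hι, ?_, hncard M⟩
    rw [Subgraph.map_verts, Subgraph.isSpanning_iff.1 hspan]
    exact Subtype.coe_image_univ W
  · rintro ⟨M, hM, rfl, rfl⟩
    have hperfect : (M.comap ι).IsPerfectMatching := by
      refine Subgraph.isPerfectMatching_iff.2 fun v => ?_
      obtain ⟨w, hvw, huniq⟩ := hM v.2
      exact ⟨⟨w, M.edge_vert hvw.symm⟩, ⟨hvw.adj_sub, hvw⟩,
        fun x hx => Subtype.ext (huniq x hx.2)⟩
    have hmap : (M.comap ι).map ι = M := by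
      refine le_antisymm ((Subgraph.map_le_iff_le_comap ι _ _).2 le_rfl) ⟨?_, ?_⟩
      · exact fun v hv => ⟨⟨v, hv⟩, hv, rfl⟩
      · exact fun u v huv => ⟨⟨u, M.edge_vert huv⟩, ⟨v, M.edge_vert huv.symm⟩,
          ⟨huv.adj_sub, huv⟩, rfl, rfl⟩
    exact ⟨M.comap ι, hperfect, by rw [← hncard, hmap]⟩

lemma exists_disjoint_isMaxIndep_iff (hα : BddAbove (Set.ncard '' {X : Set V | IsIndep G X})) :
    (∃ S T : Set V, IsMaxIndep G S ∧ IsMaxIndep G T ∧ Disjoint S T) ↔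
      ∃ M : G.Subgraph, M.IsMatching ∧ M.edgeSet.ncard = alpha G ∧
        (G.induce M.support).Colorable 2 := by
  constructor
  · rintro ⟨S, T, hS, hT, hST⟩
    obtain ⟨M, hM, hverts⟩ := hS.exists_isMatching_verts_eq_union hT hST
    refine ⟨M, hM, ?_, ?_⟩
    · rw [ncard_edgeSet_eq_of_verts_eq_union hM hverts hS.isIndep hT.isIndep, hS.ncard_eq_alpha]
    · rw [hM.support_eq_verts]
      exact colorable_two_induce_iff_exists_isIndep.2 ⟨S, T, hS.isIndep, hT.isIndep, hST, hverts⟩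
  · rintro ⟨M, hM, hcard, hbip⟩
    rw [hM.support_eq_verts] at hbip
    obtain ⟨S, T, hS, hT, hST, hverts⟩ := colorable_two_induce_iff_exists_isIndep.1 hbip
    have hScard : M.edgeSet.ncard = S.ncard := ncard_edgeSet_eq_of_verts_eq_union hM hverts hS hT
    have hTcard : M.edgeSet.ncard = T.ncard :=
      ncard_edgeSet_eq_of_verts_eq_union hM (hverts.trans (Set.union_comm S T)) hT hS
    exact ⟨S, T, isMaxIndep_of_ncard_eq_alpha hα hS (hScard.symm.trans hcard),
      isMaxIndep_of_ncard_eq_alpha hα hT (hTcard.symm.trans hcard), hST⟩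

lemma exists_isMatching_colorable_induce_support_iff {n : ℕ} :
    (∃ M : G.Subgraph, M.IsMatching ∧ M.edgeSet.ncard = n ∧
        (G.induce M.support).Colorable 2) ↔
      ∃ A : Set V, (G.induce Aᶜ).Colorable 2 ∧
        ∃ M : (G.induce Aᶜ).Subgraph, M.IsPerfectMatching ∧ M.edgeSet.ncard = n := by
  simp only [exists_isPerfectMatching_induce_iff]
  constructor
  · rintro ⟨M, hM, hcard, hbip⟩
    rw [hM.support_eq_verts] at hbip
    refine ⟨M.vertsᶜ, ?_, M, hM, (compl_compl _).symm, hcard⟩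
    rwa [compl_compl]
  · rintro ⟨A, hbip, M, hM, hverts, hcard⟩
    refine ⟨M, hM, hcard, ?_⟩
    rwa [hM.support_eq_verts, hverts]

end

/-- `hα` says that `α(G)` is finite: an infinite independent set has `ncard` equal to `0`, but its
finite subsets have unbounded cardinalities. -/
theorem stmt17_general {V : Type*} (G : SimpleGraph V)
    (hα : BddAbove (Set.ncard '' {X : Set V | IsIndep G X})) :
    ((∃ S T : Set V, IsMaxIndep G S ∧ IsMaxIndep G T ∧ Disjoint S T) ↔
      (∃ M : G.Subgraph, M.IsMatching ∧ M.edgeSet.ncard = alpha G ∧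
        (G.induce M.support).Colorable 2)) ∧
    ((∃ S T : Set V, IsMaxIndep G S ∧ IsMaxIndep G T ∧ Disjoint S T) ↔
      (∃ A : Set V, (G.induce Aᶜ).Colorable 2 ∧
        ∃ M : (G.induce Aᶜ).Subgraph, M.IsPerfectMatching ∧
          M.edgeSet.ncard = alpha G)) :=
  ⟨exists_disjoint_isMaxIndep_iff hα,
    (exists_disjoint_isMaxIndep_iff hα).trans exists_isMatching_colorable_induce_support_iff⟩

/-- For a graph `G`, the following are equivalent: (1) `G` admits two
disjoint maximum independent sets; (2) there is a matching `M` of size `α(G)` such that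
the subgraph induced by the vertices covered by `M` is bipartite; (3) there is a set
`A ⊆ V(G)` such that `G[V(G) \ A]` is a bipartite graph having a perfect matching of
size `α(G)`. -/
theorem stmt17 {V : Type*} [Fintype V] (G : SimpleGraph V) :
    ((∃ S T : Set V, IsMaxIndep G S ∧ IsMaxIndep G T ∧ Disjoint S T) ↔
      (∃ M : G.Subgraph, M.IsMatching ∧ M.edgeSet.ncard = alpha G ∧
        (G.induce M.support).Colorable 2)) ∧
    ((∃ S T : Set V, IsMaxIndep G S ∧ IsMaxIndep G T ∧ Disjoint S T) ↔
      (∃ A : Set V, (G.induce Aᶜ).Colorable 2 ∧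
        ∃ M : (G.induce Aᶜ).Subgraph, M.IsPerfectMatching ∧
          M.edgeSet.ncard = alpha G)) :=
  stmt17_general G (Set.toFinite _).bddAbove
end
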